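/- Let X and Y be random vectors in ℝⁿ that are elliptically distributed with the same location μ ∈ ℝⁿ and the same characteristic generator φ, with dispersion matrices Σ_x and Σ_y respectively, and let A = I_n − (1/n)·1_{n×n} be the centering matrix. If there exists ε ∈ ℝ such that Σ_y − Σ_x + ε·1_{n×n} is positive semidefinite, then G_n(AX − Aμ) ≤_st G_n(AY − Aμ). In particular, if μ = c·1_n for some c ∈ ℝ (including μ = 0), then G_n(X) ≤_st G_n(Y). -/

import Mathlib

open MeasureTheory ProbabilityTheory Matrix

/-- Gini index of `x ∈ ℝⁿ`: `G_n(x) = (1/n²) ∑_i ∑_j |x_i − x_j|`. -/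
noncomputable def gini {n : ℕ} (x : Fin n → ℝ) : ℝ :=
  (1 / (n : ℝ) ^ 2) * ∑ i, ∑ j, |x i - x j|

/-- Characteristic function of a random vector `X : Ω → ℝⁿ` at `t ∈ ℝⁿ`:
`E[exp(i⟨t,X⟩)]`. -/
noncomputable def charFn {Ω : Type*} [MeasurableSpace Ω] {n : ℕ}
    (P : Measure Ω) (X : Ω → (Fin n → ℝ)) (t : Fin n → ℝ) : ℂ :=
  ∫ ω, Complex.exp (((∑ i, t i * X ω i : ℝ) : ℂ) * Complex.I) ∂P

/-- The centering matrix `A = Iₙ − (1/n)·1_{n×n}`. -/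
noncomputable def centeringMatrix (n : ℕ) : Matrix (Fin n) (Fin n) ℝ :=
  1 - ((n : ℝ)⁻¹) • Matrix.of (fun _ _ => (1 : ℝ))

/-!
The centred vectors `A (X - μ)` and `A (Y - μ)` are elliptical with dispersion forms
`t ↦ (A t)ᵀ Σ (A t)`; the term `ε 1 1ᵀ` vanishes on the range of `A`, so the form of `X` is
dominated by that of `Y`, and the Gini index is a seminorm which is invariant under centring. By the
singular value decomposition, the dominated law arises from the dominating one by contracting the
coordinates of the underlying spherical vector one at a time. If `z` is spherical and `w` is an
independent uniform point of a thin shell around the unit sphere, then `‖w‖ z` and `‖z‖ w` have the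
same law; hence it suffices that contracting one coordinate of a uniform point of a shell makes it
more likely to lie in a given ball `K` of a seminorm.

To see this, consider the pairs of a point `y ∈ K`, with coordinate `v`, and a real `s` such that
replacing `v` by `s` moves `y` into the shell. Up to an error which vanishes with `x`, the two
probabilities are proportional to the integrals over these pairs of the tent function of half-width
`x` at `v - s` and at `v - d s`, where `d` is the contraction factor. The tent is a second
difference of `|v|`, and second differences commute; so, by the symmetry `s ↦ -s`, the two integrals
differ by a second difference, with step `x` in `v`, of the integral of
`max |v| |s| - max |v| (d |s|)`. This is a mixture of volumes of `K ∩ C` with ellipsoids `C`, and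
shifting `v` shifts `C`, which by Anderson's inequality cannot increase these volumes. Anderson's
inequality itself is the Prékopa–Leindler inequality for the indicators of `K ∩ (C + a)` and of its
reflection.
-/

open Set Module
open scoped ENNReal Pointwise RealInnerProductSpace

section PrekopaLeindler

theorem volume_add_volume_le_of_isCompact {A B : Set ℝ} (hA : IsCompact A) (hB : IsCompact B)
    (hA₀ : A.Nonempty) (hB₀ : B.Nonempty) : volume A + volume B ≤ volume (A + B) := by
  obtain ⟨a, haA, ha⟩ := hA.exists_isGreatest hA₀
  obtain ⟨b, hbB, hb⟩ := hB.exists_isLeast hB₀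
  have hinter : (b +ᵥ A) ∩ (a +ᵥ B) ⊆ {a + b} := by
    rintro _ ⟨⟨x, hx, rfl⟩, ⟨y, hy, hxy⟩⟩
    have hxa := ha hx
    have hby := hb hy
    simp only [vadd_eq_add, mem_singleton_iff] at hxy ⊢
    linarith
  have hsub : (b +ᵥ A) ∪ (a +ᵥ B) ⊆ A + B := by
    rintro _ (⟨x, hx, rfl⟩ | ⟨y, hy, rfl⟩)
    · exact ⟨x, hx, b, hbB, add_comm x b⟩
    · exact ⟨a, haA, y, hy, rfl⟩
  calc volume A + volume B = volume (b +ᵥ A) + volume (a +ᵥ B) := by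
        rw [measure_vadd, measure_vadd]
    _ = volume ((b +ᵥ A) ∪ (a +ᵥ B)) := by
        rw [← measure_union_add_inter _ (hB.vadd a).measurableSet,
          measure_mono_null hinter (by simp), add_zero]
    _ ≤ volume (A + B) := measure_mono hsub

theorem volume_add_volume_le {A B : Set ℝ} (hA : MeasurableSet A)
    (hB : MeasurableSet B) (hA₀ : A.Nonempty) (hB₀ : B.Nonempty) :
    volume A + volume B ≤ volume (A + B) := by
  obtain ⟨a, ha⟩ := hA₀
  obtain ⟨b, hb⟩ := hB₀
  rw [hA.measure_eq_iSup_isCompact, hB.measure_eq_iSup_isCompact]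
  simp only [iSup_and']
  refine ENNReal.biSup_add_biSup_le' (p := fun K ↦ K ⊆ A ∧ IsCompact K)
    (q := fun L ↦ L ⊆ B ∧ IsCompact L) ⟨∅, by simp⟩ ⟨∅, by simp⟩ ?_
  rintro K ⟨hKA, hK⟩ L ⟨hLB, hL⟩
  calc volume K + volume L ≤ volume (insert a K) + volume (insert b L) := by
        gcongr <;> exact subset_insert _ _
    _ ≤ volume (insert a K + insert b L) :=
        volume_add_volume_le_of_isCompact (hK.insert a) (hL.insert b) (insert_nonempty a K)
          (insert_nonempty b L)
    _ ≤ volume (A + B) :=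
        measure_mono (add_subset_add (insert_subset ha hKA) (insert_subset hb hLB))

theorem lintegral_eq_lintegral_measure_ofReal_lt {α : Type*} [MeasurableSpace α] (μ : Measure α)
    [SFinite μ] {f : α → ℝ≥0∞} (hf : Measurable f) :
    ∫⁻ x, f x ∂μ = ∫⁻ t in Ioi (0 : ℝ), μ {x | ENNReal.ofReal t < f x} := by
  have hmeas : MeasurableSet {q : ℝ × α | ENNReal.ofReal q.1 < f q.2} :=
    measurableSet_lt (by fun_prop) (by fun_prop)
  have hfib (c : ℝ≥0∞) : volume ({t : ℝ | ENNReal.ofReal t < c} ∩ Ioi 0) = c := by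
    rcases eq_or_ne c ∞ with rfl | hc
    · simp
    · have : {t : ℝ | ENNReal.ofReal t < c} ∩ Ioi 0 = Ioo 0 c.toReal := by
        ext t
        simp only [mem_inter_iff, mem_ofPred_eq, mem_Ioi, mem_Ioo, and_comm (a := 0 < t)]
        exact and_congr_left fun ht ↦ ENNReal.ofReal_lt_iff_lt_toReal ht.le hc
      rw [this, Real.volume_Ioo, sub_zero, ENNReal.ofReal_toReal hc]
  have hprod := (Measure.prod_apply hmeas (μ := volume.restrict (Ioi (0 : ℝ))) (ν := μ)).symm.trans
    (Measure.prod_apply_symm hmeas)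
  refine Eq.trans (lintegral_congr fun x ↦ ?_) hprod.symm
  rw [Measure.restrict_apply (measurable_prodMk_right hmeas)]
  exact (hfib (f x)).symm

/-- The Prékopa–Leindler inequality for the midpoint, as a property of a measure on a real vector
space; it is stable under products, which is how it reaches `ℝⁿ` from the line. -/
def IsPrekopaLeindler {E : Type*} [AddCommGroup E] [Module ℝ E] [MeasurableSpace E]
    (μ : Measure E) : Prop :=
  ∀ ⦃f g h : E → ℝ≥0∞⦄, Measurable f → Measurable g → Measurable h →
    (∀ x y, f x * g y ≤ h (midpoint ℝ x y) ^ 2) →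
    (∫⁻ x, f x ∂μ) * ∫⁻ x, g x ∂μ ≤ (∫⁻ x, h x ∂μ) ^ 2

theorem lintegral_add_lintegral_le_two_mul {f g h : ℝ → ℝ≥0∞} (hf : Measurable f)
    (hg : Measurable g) (hh : Measurable h) (hf₁ : ⨆ x, f x = 1) (hg₁ : ⨆ x, g x = 1)
    (hfgh : ∀ x y, f x * g y ≤ h (midpoint ℝ x y) ^ 2) :
    (∫⁻ x, f x) + ∫⁻ x, g x ≤ 2 * ∫⁻ x, h x := by
  simp only [lintegral_eq_lintegral_measure_ofReal_lt volume, hf, hg, hh]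
  have hanti : Antitone fun t : ℝ ↦ volume {x | ENNReal.ofReal t < f x} := fun s t hst ↦
    measure_mono fun x hx ↦ (ENNReal.ofReal_le_ofReal hst).trans_lt hx
  rw [← lintegral_const_mul' _ _ ENNReal.ofNat_ne_top, ← lintegral_add_left hanti.measurable]
  refine setLIntegral_mono' measurableSet_Ioi fun t _ ↦ ?_
  set τ := ENNReal.ofReal t
  rcases le_or_gt 1 τ with hτ₁ | hτ₁
  · have hempty {k : ℝ → ℝ≥0∞} (hk : ⨆ x, k x = 1) : {x | τ < k x} = ∅ :=
      eq_empty_of_forall_notMem fun x hx ↦ (hx.trans_le (hk ▸ le_iSup k x)).not_ge hτ₁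
    simp [hempty hf₁, hempty hg₁]
  have hlevel {k : ℝ → ℝ≥0∞} (hk : ⨆ x, k x = 1) : {x | τ < k x}.Nonempty :=
    lt_iSup_iff.1 (hτ₁.trans_eq hk.symm)
  have hsub : {x | τ < f x} + {x | τ < g x} ⊆ (2 : ℝ) • {x | τ < h x} := by
    rintro _ ⟨x, hx, y, hy, rfl⟩
    have hlt : τ ^ 2 < h (midpoint ℝ x y) ^ 2 :=
      (sq τ ▸ ENNReal.mul_lt_mul hx hy).trans_le (hfgh x y)
    exact ⟨midpoint ℝ x y, lt_of_pow_lt_pow_left' 2 hlt, by simp [midpoint_eq_smul_add]⟩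
  calc volume {x | τ < f x} + volume {x | τ < g x} ≤ volume ({x | τ < f x} + {x | τ < g x}) :=
        volume_add_volume_le (measurableSet_lt measurable_const hf)
          (measurableSet_lt measurable_const hg) (hlevel hf₁) (hlevel hg₁)
    _ ≤ volume ((2 : ℝ) • {x | τ < h x}) := measure_mono hsub
    _ = 2 * volume {x | τ < h x} := by simp [Measure.addHaar_smul]

theorem mul_le_sq_of_add_le_two_mul {a b c : ℝ≥0∞} (h : a + b ≤ 2 * c) : a * b ≤ c ^ 2 := by
  wlog hab : a ≤ b generalizing a b
  · rw [mul_comm]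
    exact this (add_comm a b ▸ h) (le_of_not_ge hab)
  obtain ⟨k, rfl⟩ := exists_add_of_le hab
  have h4 : (2 * 2) * (a * (a + k)) ≤ (2 * 2) * c ^ 2 := calc
    (2 * 2) * (a * (a + k)) ≤ (2 * 2) * (a * (a + k)) + k ^ 2 := le_self_add
    _ = (a + (a + k)) ^ 2 := by ring
    _ ≤ (2 * c) ^ 2 := by gcongr
    _ = (2 * 2) * c ^ 2 := by ring
  exact (ENNReal.mul_le_mul_iff_right (by norm_num) (by finiteness)).1 h4

theorem lintegral_mul_lintegral_le_sq_of_bounded {f g h : ℝ → ℝ≥0∞} (hf : Measurable f)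
    (hg : Measurable g) (hh : Measurable h) (hf₁ : ⨆ x, f x ≠ ∞) (hg₁ : ⨆ x, g x ≠ ∞)
    (hfgh : ∀ x y, f x * g y ≤ h (midpoint ℝ x y) ^ 2) :
    (∫⁻ x, f x) * ∫⁻ x, g x ≤ (∫⁻ x, h x) ^ 2 := by
  set F := ⨆ x, f x
  set G := ⨆ x, g x
  rcases eq_or_ne F 0 with hF₀ | hF₀
  · simp [ENNReal.iSup_eq_zero.1 hF₀]
  rcases eq_or_ne G 0 with hG₀ | hG₀
  · simp [ENNReal.iSup_eq_zero.1 hG₀]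
  set s := (F * G) ^ (1 / 2 : ℝ) with hs
  have hs₂ : s ^ 2 = F * G := by
    rw [hs, ← ENNReal.rpow_mul_natCast]
    norm_num
  have : s ≠ 0 := fun h ↦ mul_ne_zero hF₀ hG₀ (by rw [← hs₂, h, zero_pow two_ne_zero])
  have : s ≠ ∞ := fun h ↦ ENNReal.mul_ne_top hf₁ hg₁ (by
    rw [← hs₂, h, ENNReal.top_pow two_ne_zero])
  have hnorm := lintegral_add_lintegral_le_two_mul (hf.const_mul F⁻¹) (hg.const_mul G⁻¹)
    (hh.const_mul s⁻¹) (by rw [← ENNReal.mul_iSup, ENNReal.inv_mul_cancel hF₀ hf₁])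
    (by rw [← ENNReal.mul_iSup, ENNReal.inv_mul_cancel hG₀ hg₁]) fun x y ↦ by
      rw [mul_mul_mul_comm, mul_pow, ← ENNReal.inv_pow, hs₂,
        ENNReal.mul_inv (.inl hF₀) (.inl hf₁)]
      gcongr
      exact hfgh x y
  simp only [lintegral_const_mul _ hf, lintegral_const_mul _ hg, lintegral_const_mul _ hh] at hnorm
  have hmul := mul_le_sq_of_add_le_two_mul hnorm
  rw [mul_mul_mul_comm, mul_pow, ← ENNReal.inv_pow, hs₂,
    ENNReal.mul_inv (.inl hF₀) (.inl hf₁)] at hmul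
  rwa [ENNReal.mul_le_mul_iff_right (mul_ne_zero (by simpa using hf₁) (by simpa using hg₁))
    (by finiteness)] at hmul

theorem isPrekopaLeindler_volume_real : IsPrekopaLeindler (volume : Measure ℝ) := by
  intro f g h hf hg hh hfgh
  have htrunc (M N : ℕ) :
      (∫⁻ x, min (f x) M) * ∫⁻ x, min (g x) N ≤ (∫⁻ x, h x) ^ 2 :=
    lintegral_mul_lintegral_le_sq_of_bounded (by fun_prop) (by fun_prop) hh
      (ne_top_of_le_ne_top (ENNReal.natCast_ne_top M) (iSup_le fun x ↦ min_le_right _ _))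
      (ne_top_of_le_ne_top (ENNReal.natCast_ne_top N) (iSup_le fun x ↦ min_le_right _ _))
      fun x y ↦ (mul_le_mul' (min_le_left _ _) (min_le_left _ _)).trans (hfgh x y)
  have hlim {k : ℝ → ℝ≥0∞} (hk : Measurable k) :
      ∫⁻ x, k x = ⨆ N : ℕ, ∫⁻ x, min (k x) N := by
    rw [← lintegral_iSup (f := fun (N : ℕ) x ↦ min (k x) N) (by fun_prop) fun M N hMN x ↦
      min_le_min_left _ (by exact_mod_cast hMN)]
    simp only [← inf_iSup_eq, ENNReal.iSup_natCast, inf_top_eq]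
  simpa only [hlim hf, hlim hg, ENNReal.iSup_mul, ENNReal.mul_iSup, iSup_le_iff]
    using fun N M ↦ htrunc M N

section

variable {E F : Type*} [AddCommGroup E] [Module ℝ E] [MeasurableSpace E]
  [AddCommGroup F] [Module ℝ F] [MeasurableSpace F] {μ : Measure E} {ν : Measure F}

theorem IsPrekopaLeindler.prod [SFinite ν] (hμ : IsPrekopaLeindler μ) (hν : IsPrekopaLeindler ν) :
    IsPrekopaLeindler (μ.prod ν) := by
  intro f g h hf hg hh hfgh
  simp only [lintegral_prod _ hf.aemeasurable, lintegral_prod _ hg.aemeasurable,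
    lintegral_prod _ hh.aemeasurable]
  refine hμ hf.lintegral_prod_right' hg.lintegral_prod_right' hh.lintegral_prod_right' fun x y ↦
    hν (by fun_prop) (by fun_prop) (by fun_prop) fun u v ↦ ?_
  simpa [midpoint_eq_smul_add] using hfgh (x, u) (y, v)

theorem IsPrekopaLeindler.of_measurePreserving (hμ : IsPrekopaLeindler μ) (L : E →ₗ[ℝ] F)
    (hL : MeasurePreserving L μ ν) : IsPrekopaLeindler ν := by
  intro f g h hf hg hh hfgh
  rw [← hL.lintegral_comp hf, ← hL.lintegral_comp hg, ← hL.lintegral_comp hh]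
  refine hμ (hf.comp hL.measurable) (hg.comp hL.measurable) (hh.comp hL.measurable) fun x y ↦ ?_
  simpa [midpoint_eq_smul_add] using hfgh (L x) (L y)

end

theorem isPrekopaLeindler_volume_pi (n : ℕ) :
    IsPrekopaLeindler (volume : Measure (Fin n → ℝ)) := by
  induction n with
  | zero =>
    intro f g h _ _ _ hfgh
    simpa only [volume_pi, Measure.pi_of_empty _ 0, lintegral_dirac, midpoint_self] using hfgh 0 0
  | succ n ih =>
    have hcons : ⇑(Fin.consLinearEquiv ℝ fun _ : Fin (n + 1) ↦ ℝ) =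
        (MeasurableEquiv.piFinSuccAbove (fun _ ↦ ℝ) 0).symm :=
      funext fun x ↦ (Fin.insertNth_zero' x.1 x.2).symm
    exact (isPrekopaLeindler_volume_real.prod ih).of_measurePreserving
      (Fin.consLinearEquiv ℝ fun _ ↦ ℝ).toLinearMap
      (hcons ▸ (volume_preserving_piFinSuccAbove (fun _ ↦ ℝ) 0).symm)

theorem isPrekopaLeindler_volume (E : Type*) [NormedAddCommGroup E] [InnerProductSpace ℝ E]
    [FiniteDimensional ℝ E] [MeasurableSpace E] [BorelSpace E] :
    IsPrekopaLeindler (volume : Measure E) :=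
  (isPrekopaLeindler_volume_pi (finrank ℝ E)).of_measurePreserving
    ((stdOrthonormalBasis ℝ E).repr.symm.toLinearEquiv ∘ₗ
      (WithLp.linearEquiv 2 ℝ (Fin (finrank ℝ E) → ℝ)).symm.toLinearMap)
    ((stdOrthonormalBasis ℝ E).repr.symm.measurePreserving.comp
      (PiLp.volume_preserving_toLp (Fin (finrank ℝ E))))

end PrekopaLeindler

section Anderson

variable {E : Type*} [NormedAddCommGroup E] [InnerProductSpace ℝ E]
  [FiniteDimensional ℝ E] [MeasurableSpace E] [BorelSpace E]

theorem volume_inter_vadd_le {K C : Set E} (hK : Convex ℝ K) (hC : Convex ℝ C)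
    (hKm : MeasurableSet K) (hCm : MeasurableSet C) (hK' : -K = K) (hC' : -C = C) (v : E) :
    volume (K ∩ (v +ᵥ C)) ≤ volume (K ∩ C) := by
  set A := K ∩ (v +ᵥ C)
  have hAm : MeasurableSet A := hKm.inter (hCm.const_vadd v)
  have hmid : ∀ x ∈ A, ∀ y ∈ -A, midpoint ℝ x y ∈ K ∩ C := by
    rintro x ⟨hxK, c, hc, rfl⟩ y ⟨hyK, d, hd, hy⟩
    refine ⟨hK.midpoint_mem hxK (by rwa [← hK']), ?_⟩
    have hd' : -d ∈ C := by rwa [← hC', neg_mem_neg]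
    convert hC.midpoint_mem hc hd' using 1
    rw [← neg_eq_iff_eq_neg] at hy
    simp only [midpoint_eq_smul_add, ← hy, vadd_eq_add]
    module
  have hPL := isPrekopaLeindler_volume E (measurable_one.indicator hAm)
    (measurable_one.indicator hAm.neg) (measurable_one.indicator (hKm.inter hCm)) fun x y ↦ ?_
  · rw [lintegral_indicator_one hAm, lintegral_indicator_one hAm.neg,
      lintegral_indicator_one (hKm.inter hCm), Measure.measure_neg, ← sq] at hPL
    exact (ENNReal.pow_le_pow_left_iff two_ne_zero).1 hPL
  · by_cases hx : x ∈ A <;> by_cases hy : y ∈ -A <;>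
      simp [hx, hy, -mem_inter_iff, -Set.mem_neg]
    simp [hmid x hx y hy, -mem_inter_iff]

end Anderson

section CoordinateContraction

section OneVariable

/-- The tent function of half-width `x ≥ 0`, equal to `max (x - |u|) 0`; this form makes it the
second difference of `|·|` with step `x`. -/
noncomputable def tent (x u : ℝ) : ℝ := (|u + x| + |u - x|) / 2 - |u|

/-- The difference `max |v| |s| - max |v| (d * |s|)` for `d ∈ [0, 1]`, written with absolute values
of linear forms. -/
noncomputable def maxGap (d v s : ℝ) : ℝ :=
  (|v + s| + |v - s|) / 2 - (|v + d * s| + |v - d * s|) / 2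

theorem abs_add_add_abs_sub_div_two (a b : ℝ) : (|a + b| + |a - b|) / 2 = max |a| |b| := by
  rw [max_def]
  split_ifs with h <;> cases abs_cases a <;> cases abs_cases b <;> cases abs_cases (a + b) <;>
    cases abs_cases (a - b) <;> linarith

variable {x u d v s : ℝ}

theorem tent_nonneg : 0 ≤ tent x u := by
  rw [tent, abs_add_add_abs_sub_div_two, sub_nonneg]
  exact le_max_left _ _

theorem tent_eq_zero (h : |x| ≤ |u|) : tent x u = 0 := by
  rw [tent, abs_add_add_abs_sub_div_two, max_eq_left h, sub_self]

theorem tent_pos (h : |u| < |x|) : 0 < tent x u := by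
  rw [tent, abs_add_add_abs_sub_div_two, max_eq_right h.le]
  exact sub_pos.2 h

theorem tent_le : tent x u ≤ |x| := by
  rw [tent, abs_add_add_abs_sub_div_two, sub_le_iff_le_add]
  exact max_le (le_add_of_nonneg_left (abs_nonneg x)) (le_add_of_nonneg_right (abs_nonneg u))

theorem maxGap_eq (hd : 0 ≤ d) : maxGap d v s = max |v| |s| - max |v| (d * |s|) := by
  rw [maxGap, abs_add_add_abs_sub_div_two, abs_add_add_abs_sub_div_two, abs_mul, abs_of_nonneg hd]

theorem maxGap_nonneg (hd₀ : 0 ≤ d) (hd₁ : d ≤ 1) : 0 ≤ maxGap d v s := by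
  rw [maxGap_eq hd₀, sub_nonneg]
  exact max_le_max_left _ (mul_le_of_le_one_left (abs_nonneg s) hd₁)

-- Second differences commute: in the variable `v`, the second difference with step `x` of
-- `maxGap d v s` is that of `tent x v` with step `s` minus that with step `d * s`.
theorem tent_add_maxGap :
    tent x (v - s) + tent x (v + s) + (maxGap d v s + maxGap d v s) =
      tent x (v - d * s) + tent x (v + d * s) + (maxGap d (v + x) s + maxGap d (v - x) s) := by
  unfold tent maxGap
  ring_nf

theorem ofReal_maxGap (hd : 0 ≤ d) :
    ENNReal.ofReal (maxGap d v s) =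
      ENNReal.ofReal |s| * volume ({b | |v| < b * |s|} ∩ Ioo d 1) := by
  rcases (abs_nonneg s).eq_or_lt with hs | hs
  · simp [maxGap_eq hd, ← hs]
  have hset : {b | |v| < b * |s|} ∩ Ioo d 1 = Ioo (max (|v| / |s|) d) 1 := by
    ext b
    simp [div_lt_iff₀ hs, and_assoc]
  rw [hset, Real.volume_Ioo, ← ENNReal.ofReal_mul (abs_nonneg s), maxGap_eq hd, mul_sub,
    mul_max_of_nonneg _ _ hs.le, mul_div_cancel₀ _ hs.ne', mul_one, mul_comm _ d]
  rcases le_total |v| |s| with hvs | hvs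
  · rw [max_eq_right hvs]
  · rw [max_eq_left hvs, ENNReal.ofReal_of_nonpos (sub_nonpos.2 (le_max_left _ _)),
      ENNReal.ofReal_of_nonpos (sub_nonpos.2 (hvs.trans (le_max_left _ _)))]

theorem lintegral_abs_mul_comp_sq {f : ℝ → ℝ≥0∞} :
    ∫⁻ s, ENNReal.ofReal |s| * f (s ^ 2) = ∫⁻ σ in Ioi 0, f σ := by
  have hhalf {A : Set ℝ} (hA : MeasurableSet A) (himage : (fun s ↦ s ^ 2) '' A = Ioi 0)
      (hinj : InjOn (fun s : ℝ ↦ s ^ 2) A) :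
      2 * ∫⁻ s in A, ENNReal.ofReal |s| * f (s ^ 2) = ∫⁻ σ in Ioi 0, f σ := by
    rw [← himage, lintegral_image_eq_lintegral_abs_deriv_mul hA
      (fun s _ ↦ (hasDerivAt_pow 2 s).hasDerivWithinAt) hinj,
      ← lintegral_const_mul' _ _ ENNReal.ofNat_ne_top]
    refine lintegral_congr fun s ↦ ?_
    rw [← mul_assoc]
    simp [abs_mul, ENNReal.ofReal_mul]
  have hpos := hhalf measurableSet_Ioi (ext fun σ ↦ ⟨fun ⟨s, hs, h⟩ ↦ h ▸ pow_pos (mem_Ioi.1 hs) 2,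
    fun hσ ↦ ⟨√σ, Real.sqrt_pos.2 hσ, Real.sq_sqrt (le_of_lt hσ)⟩⟩)
    fun s hs t ht h ↦ (pow_left_inj₀ (le_of_lt hs) (le_of_lt ht) two_ne_zero).1 h
  have hneg := hhalf measurableSet_Iio (ext fun σ ↦ ⟨fun ⟨s, hs, h⟩ ↦
    h ▸ sq_pos_of_neg (mem_Iio.1 hs), fun hσ ↦ ⟨-√σ, neg_lt_zero.2 (Real.sqrt_pos.2 hσ), by
      simp [Real.sq_sqrt (le_of_lt hσ)]⟩⟩)
    fun s hs t ht h ↦ (sq_eq_sq_iff_eq_or_eq_neg.1 h).resolve_right fun h' ↦ by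
      simp only [mem_Iio] at hs ht
      linarith
  rw [← lintegral_add_compl _ measurableSet_Ioi, compl_Ioi, setLIntegral_congr Iio_ae_eq_Iic.symm,
    ← ENNReal.mul_right_inj two_ne_zero ENNReal.ofNat_ne_top, mul_add, hpos, hneg, two_mul]

theorem lintegral_tent_ne_top : ∫⁻ u, ENNReal.ofReal (tent x u) ≠ ∞ := by
  have hle : ∫⁻ u, ENNReal.ofReal (tent x u) ≤
      ∫⁻ u, (Metric.closedBall (0 : ℝ) |x|).indicator (fun _ ↦ ENNReal.ofReal |x|) u := by
    refine lintegral_mono fun u ↦ ?_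
    by_cases hu : u ∈ Metric.closedBall (0 : ℝ) |x|
    · simpa [hu] using ENNReal.ofReal_le_ofReal tent_le
    · have : |x| ≤ |u| := by simpa using (lt_of_not_ge (by simpa using hu)).le
      simp [hu, tent_eq_zero this]
  rw [lintegral_indicator measurableSet_closedBall, setLIntegral_const] at hle
  exact ne_top_of_le_ne_top (ENNReal.mul_ne_top ENNReal.ofReal_ne_top
    measure_closedBall_lt_top.ne) hle

theorem measurable_tent : Measurable (tent x) := by
  unfold tent
  fun_prop

theorem lintegral_tent_ne_zero (hx : 0 < x) : ∫⁻ u, ENNReal.ofReal (tent x u) ≠ 0 := by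
  rw [← pos_iff_ne_zero, lintegral_pos_iff_support measurable_tent.ennreal_ofReal]
  refine (Metric.measure_ball_pos volume (0 : ℝ) hx).trans_le (measure_mono fun u hu ↦ ?_)
  have : |u| < |x| := by simpa [abs_of_pos hx] using hu
  simpa using tent_pos this

end OneVariable

/-- The points whose squared norm lies in `S`. -/
def shell (E : Type*) [NormedAddCommGroup E] (S : Set ℝ) : Set E := {z | ‖z‖ ^ 2 ∈ S}

variable {E : Type*} [NormedAddCommGroup E]

theorem measurableSet_shell [MeasurableSpace E] [BorelSpace E] {S : Set ℝ} (hS : MeasurableSet S) :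
    MeasurableSet (shell E S) :=
  (measurable_norm.pow_const 2) hS

variable [InnerProductSpace ℝ E]

/-- The point with `e`-coordinate `s` on the line through `y` parallel to the unit vector `e`. -/
def setCoord (e : E) (s : ℝ) (y : E) : E := y + (s - ⟪e, y⟫) • e

/-- Multiplication of the `e`-coordinate by `d`, fixing the orthogonal complement of the unit
vector `e`. -/
noncomputable def scaleCoord (e : E) (d : ℝ) : E →ₗ[ℝ] E :=
  LinearMap.id - (1 - d) • (innerₛₗ ℝ e).smulRight e

theorem scaleCoord_apply (e : E) (d : ℝ) (z : E) :
    scaleCoord e d z = z - ((1 - d) * ⟪e, z⟫) • e := by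
  simp [scaleCoord, mul_smul]

theorem setCoord_mul_add (e : E) (d u : ℝ) (z : E) :
    setCoord e (d * ⟪e, z⟫ + u) z = scaleCoord e d z + u • e := by
  rw [setCoord, scaleCoord_apply]
  module

theorem setCoord_inner_self (e z : E) : setCoord e ⟪e, z⟫ z = z := by
  simp [setCoord]

/-- The sections, at level `σ` and contraction `b`, into which `maxGap` decomposes: after the
substitution `σ = ‖setCoord e s y‖ ^ 2` the condition `|v| < b * |s|` on the `e`-coordinate `v` of
`y` describes an ellipsoid. -/
def coordEllipsoid (e : E) (b σ : ℝ) : Set E :=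
  {y | ⟪e, y⟫ ^ 2 < b ^ 2 * (σ - (‖y‖ ^ 2 - ⟪e, y⟫ ^ 2))}

theorem neg_coordEllipsoid (e : E) (b σ : ℝ) : -coordEllipsoid e b σ = coordEllipsoid e b σ := by
  ext y
  simp [coordEllipsoid]

theorem convex_coordEllipsoid (e : E) {b : ℝ} (hb : |b| ≤ 1) (σ : ℝ) :
    Convex ℝ (coordEllipsoid e b σ) := by
  have hb₂ : 0 ≤ 1 - b ^ 2 := sub_nonneg.2 ((sq_le_one_iff_abs_le_one b).2 hb)
  have hinner : ConvexOn ℝ univ fun y : E ↦ ⟪e, y⟫ ^ 2 :=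
    (even_two.convexOn_pow (𝕜 := ℝ)).comp_linearMap (innerₛₗ ℝ e)
  have hconv : ConvexOn ℝ univ fun y : E ↦ b ^ 2 * ‖y‖ ^ 2 + (1 - b ^ 2) * ⟪e, y⟫ ^ 2 :=
    ((convexOn_univ_norm.pow (fun _ _ ↦ norm_nonneg _) 2).smul (sq_nonneg b)).add
      (hinner.smul hb₂)
  convert hconv.convex_lt (b ^ 2 * σ) using 1
  ext y
  simp only [coordEllipsoid, mem_ofPred_eq, mem_univ, true_and]
  constructor <;> intro h <;> linarith

theorem coordEllipsoid_subset_ball (e : E) {b : ℝ} (hb : |b| ≤ 1) (σ : ℝ) :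
    coordEllipsoid e b σ ⊆ Metric.closedBall 0 (√σ) := by
  intro y hy
  have hb₂ : b ^ 2 ≤ 1 := (sq_le_one_iff_abs_le_one b).2 hb
  have : ‖y‖ ^ 2 ≤ σ := by
    simp only [coordEllipsoid, mem_ofPred_eq] at hy
    by_contra! h
    nlinarith [sq_nonneg ⟪e, y⟫, sq_nonneg b]
  simpa using Real.le_sqrt_of_sq_le this

section UnitVector

variable {e : E} (he : ‖e‖ = 1)
include he

theorem inner_setCoord (s : ℝ) (y : E) : ⟪e, setCoord e s y⟫ = s := by
  simp [setCoord, inner_add_right, inner_smul_right, he]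

theorem setCoord_setCoord (s t : ℝ) (y : E) : setCoord e s (setCoord e t y) = setCoord e s y := by
  rw [setCoord, inner_setCoord he, setCoord, setCoord]
  module

theorem norm_sq_setCoord (s : ℝ) (y : E) :
    ‖setCoord e s y‖ ^ 2 = ‖y‖ ^ 2 - ⟪e, y⟫ ^ 2 + s ^ 2 := by
  rw [setCoord, norm_add_sq_real, inner_smul_right, real_inner_comm, norm_smul, he, mul_one,
    Real.norm_eq_abs, sq_abs]
  ring

theorem indicator_shell_setCoord (S : Set ℝ) (s : ℝ) (y : E) :
    (shell E S).indicator (1 : E → ℝ≥0∞) (setCoord e s y) =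
      S.indicator 1 (‖y‖ ^ 2 - ⟪e, y⟫ ^ 2 + s ^ 2) := by
  rw [← norm_sq_setCoord he]
  rfl

theorem mem_smul_vadd_coordEllipsoid {x b σ : ℝ} {y : E} :
    y ∈ x • e +ᵥ coordEllipsoid e b σ ↔
      (⟪e, y⟫ - x) ^ 2 < b ^ 2 * (σ - (‖y‖ ^ 2 - ⟪e, y⟫ ^ 2)) := by
  have hx : -x • e + y = setCoord e (⟪e, y⟫ - x) y := by
    rw [setCoord]
    module
  rw [mem_vadd_set_iff_neg_vadd_mem, vadd_eq_add, ← neg_smul, hx, coordEllipsoid, mem_ofPred_eq,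
    norm_sq_setCoord he, inner_setCoord he, add_sub_cancel_right]

end UnitVector

section OrthonormalBasis

variable {ι : Type*} [Fintype ι] (b : OrthonormalBasis ι ℝ E)

/-- The linear map multiplying the `i`-th coordinate in the orthonormal basis `b` by `d i`. -/
noncomputable def scaleBasis (d : ι → ℝ) : E →ₗ[ℝ] E :=
  b.toBasis.constr ℝ fun i ↦ d i • b i

theorem scaleBasis_apply_self (d : ι → ℝ) (i : ι) : scaleBasis b d (b i) = d i • b i := by
  rw [scaleBasis, ← b.coe_toBasis, Basis.constr_basis]

theorem scaleBasis_one : scaleBasis b 1 = LinearMap.id :=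
  b.toBasis.ext fun i ↦ by simp [scaleBasis_apply_self]

theorem scaleBasis_piecewise_insert [DecidableEq ι] {s : Finset ι} {k : ι} (hk : k ∉ s)
    (d : ι → ℝ) :
    scaleBasis b ((insert k s).piecewise d 1) =
      scaleBasis b (s.piecewise d 1) ∘ₗ scaleCoord (b k) (d k) := by
  refine b.toBasis.ext fun i ↦ ?_
  rcases eq_or_ne i k with rfl | hi
  · have : scaleCoord (b i) (d i) (b i) = d i • b i := by
      rw [scaleCoord_apply, real_inner_self_eq_norm_sq, b.norm_eq_one]
      module
    simp [scaleBasis_apply_self, this, hk]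
  · simp [scaleBasis_apply_self, scaleCoord_apply, b.inner_eq_zero hi.symm, hi, Finset.piecewise]

end OrthonormalBasis

variable [FiniteDimensional ℝ E] [MeasurableSpace E] [BorelSpace E]

theorem lintegral_lintegral_setCoord {e : E} (he : ‖e‖ = 1) {F : E × ℝ → ℝ≥0∞} (hF : Measurable F) :
    ∫⁻ y, ∫⁻ s, F (y, s) = ∫⁻ z, ∫⁻ v, F (setCoord e v z, ⟪e, z⟫) := calc
  ∫⁻ y, ∫⁻ s, F (y, s) = ∫⁻ y, ∫⁻ u, F (y, u + ⟪e, y⟫) :=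
    lintegral_congr fun y ↦ (lintegral_add_right_eq_self (fun s ↦ F (y, s)) _).symm
  _ = ∫⁻ u, ∫⁻ y, F (y, u + ⟪e, y⟫) := lintegral_lintegral_swap (by fun_prop)
  _ = ∫⁻ u, ∫⁻ z, F (z - u • e, ⟪e, z⟫) := lintegral_congr fun u ↦ by
    rw [← lintegral_sub_right_eq_self _ (u • e)]
    simp [inner_sub_right, inner_smul_right, he]
  _ = ∫⁻ z, ∫⁻ u, F (z - u • e, ⟪e, z⟫) := lintegral_lintegral_swap (by fun_prop)
  _ = ∫⁻ z, ∫⁻ v, F (setCoord e v z, ⟪e, z⟫) := lintegral_congr fun z ↦ by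
    rw [← lintegral_sub_left_eq_self _ ⟪e, z⟫]
    congr! 4
    rw [setCoord]
    module

/-- The integral of `w` over the pairs `(y, s)` with `y ∈ K` and `setCoord e s y ∈ B`; the first
argument of `w` is the `e`-coordinate of `y`. -/
noncomputable def chordIntegral (e : E) (K B : Set E) (w : ℝ → ℝ → ℝ) : ℝ≥0∞ :=
  ∫⁻ y, ∫⁻ s, K.indicator 1 y * B.indicator 1 (setCoord e s y) * ENNReal.ofReal (w ⟪e, y⟫ s)

variable {d : ℝ} {e : E} {K B : Set E} {w w₁ w₂ : ℝ → ℝ → ℝ}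

theorem measurable_setCoord : Measurable fun q : E × ℝ ↦ setCoord e q.2 q.1 := by
  unfold setCoord
  fun_prop

theorem measurable_chordIntegrand (hK : MeasurableSet K) (hB : MeasurableSet B)
    (hw : Measurable w.uncurry) :
    Measurable fun q : E × ℝ ↦ K.indicator 1 q.1 * B.indicator 1 (setCoord e q.2 q.1) *
      ENNReal.ofReal (w ⟪e, q.1⟫ q.2) := by
  have : Measurable fun q : E × ℝ ↦ K.indicator (1 : E → ℝ≥0∞) q.1 :=
    (measurable_one.indicator hK).comp measurable_fst
  have hB' : Measurable fun q : E × ℝ ↦ B.indicator (1 : E → ℝ≥0∞) (setCoord e q.2 q.1) :=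
    (measurable_one.indicator hB).comp measurable_setCoord
  have : Measurable fun q : E × ℝ ↦ w ⟪e, q.1⟫ q.2 :=
    hw.comp ((measurable_fst.const_inner).prodMk measurable_snd)
  fun_prop

theorem chordIntegral_add (hK : MeasurableSet K) (hB : MeasurableSet B)
    (hw : Measurable w₁.uncurry) (hw₁ : ∀ v s, 0 ≤ w₁ v s) (hw₂ : ∀ v s, 0 ≤ w₂ v s) :
    chordIntegral e K B (fun v s ↦ w₁ v s + w₂ v s) =
      chordIntegral e K B w₁ + chordIntegral e K B w₂ := by
  have hm := measurable_chordIntegrand (e := e) hK hB hw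
  unfold chordIntegral
  rw [← lintegral_add_left hm.lintegral_prod_right']
  refine lintegral_congr fun y ↦ Eq.trans (lintegral_congr fun s ↦ ?_)
    (lintegral_add_left (hm.comp measurable_prodMk_left) _)
  simp only [ENNReal.ofReal_add (hw₁ _ _) (hw₂ _ _), mul_add, Function.comp_apply]

theorem chordIntegral_eq (he : ‖e‖ = 1) (hK : MeasurableSet K) (hB : MeasurableSet B)
    (hw : Measurable w.uncurry) :
    chordIntegral e K B w =
      ∫⁻ z in B, ∫⁻ v, K.indicator 1 (setCoord e v z) * ENNReal.ofReal (w v ⟪e, z⟫) := by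
  rw [chordIntegral, lintegral_lintegral_setCoord he (measurable_chordIntegrand hK hB hw),
    ← lintegral_indicator hB]
  refine lintegral_congr fun z ↦ ?_
  simp only [setCoord_setCoord he, setCoord_inner_self, inner_setCoord he]
  by_cases hz : z ∈ B <;> simp [hz]

theorem chordIntegral_comp_neg (he : ‖e‖ = 1) (S : Set ℝ) :
    chordIntegral e K (shell E S) (fun v s ↦ w v (-s)) = chordIntegral e K (shell E S) w := by
  refine lintegral_congr fun y ↦ ?_
  rw [← lintegral_neg_eq_self]
  refine lintegral_congr fun s ↦ ?_
  simp only [neg_neg, indicator_shell_setCoord he, neg_sq]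

theorem lintegral_indicator_mul_abs {S : Set ℝ} (hS : MeasurableSet S) {b : ℝ} (hb : 0 < b)
    (q a : ℝ) :
    ∫⁻ s, S.indicator 1 (q + s ^ 2) * ENNReal.ofReal |s| * {s | |a| < b * |s|}.indicator 1 s =
      volume ({σ | a ^ 2 < b ^ 2 * (σ - q)} ∩ S) := calc
  _ = ∫⁻ s, ENNReal.ofReal |s| *
        (S.indicator 1 (q + s ^ 2) * {σ | a ^ 2 < b ^ 2 * σ}.indicator 1 (s ^ 2)) := by
    refine lintegral_congr fun s ↦ ?_
    have : |a| < b * |s| ↔ a ^ 2 < b ^ 2 * s ^ 2 := by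
      rw [← mul_pow, sq_lt_sq, abs_mul, abs_of_pos hb]
    simp only [indicator, mem_ofPred_eq, this, Pi.one_apply]
    ring
  _ = ∫⁻ σ, S.indicator 1 (q + σ) * {σ | a ^ 2 < b ^ 2 * σ}.indicator 1 σ := by
    rw [lintegral_abs_mul_comp_sq (f := fun σ ↦ S.indicator 1 (q + σ) * _),
      ← lintegral_indicator measurableSet_Ioi]
    refine lintegral_congr fun σ ↦ ?_
    by_cases hσ : 0 < σ
    · simp [hσ]
    · have : ¬a ^ 2 < b ^ 2 * σ := by nlinarith [sq_nonneg a, sq_nonneg b]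
      simp [hσ, this]
  _ = ∫⁻ σ, ({σ | a ^ 2 < b ^ 2 * (σ - q)} ∩ S).indicator 1 σ := by
    rw [← lintegral_sub_right_eq_self _ q]
    refine lintegral_congr fun σ ↦ ?_
    rw [inter_indicator_one, mul_comm, add_sub_cancel]
    rfl
  _ = _ := lintegral_indicator_one ((measurableSet_lt (by fun_prop) (by fun_prop)).inter hS)

theorem lintegral_mul_maxGap {S : Set ℝ} (hS : MeasurableSet S) (hd : 0 ≤ d) (q a : ℝ) :
    ∫⁻ s, S.indicator 1 (q + s ^ 2) * ENNReal.ofReal (maxGap d a s) =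
      ∫⁻ b in Ioo d 1, volume ({σ | a ^ 2 < b ^ 2 * (σ - q)} ∩ S) := by
  set P : Set (ℝ × ℝ) := {r | |a| < r.2 * |r.1|}
  have hP : MeasurableSet P := measurableSet_lt (by fun_prop) (by fun_prop)
  have : Measurable (P.indicator (1 : ℝ × ℝ → ℝ≥0∞)) := measurable_one.indicator hP
  have : Measurable fun s : ℝ ↦ S.indicator (1 : ℝ → ℝ≥0∞) (q + s ^ 2) :=
    (measurable_one.indicator hS).comp (by fun_prop)
  calc
    _ = ∫⁻ s, ∫⁻ b in Ioo d 1,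
          S.indicator 1 (q + s ^ 2) * ENNReal.ofReal |s| * P.indicator 1 (s, b) := by
      refine lintegral_congr fun s ↦ ?_
      have hPs : MeasurableSet {b | |a| < b * |s|} := measurable_prodMk_left hP
      rw [ofReal_maxGap hd, ← mul_assoc, ← Measure.restrict_apply hPs,
        ← lintegral_indicator_one hPs, ← lintegral_const_mul _ (measurable_one.indicator hPs)]
      rfl
    _ = ∫⁻ b in Ioo d 1, ∫⁻ s,
          S.indicator 1 (q + s ^ 2) * ENNReal.ofReal |s| * P.indicator 1 (s, b) :=
      lintegral_lintegral_swap (by fun_prop)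
    _ = _ := setLIntegral_congr_fun measurableSet_Ioo fun b hb ↦
      lintegral_indicator_mul_abs hS (hd.trans_lt hb.1) q a

theorem measurableSet_coordEllipsoid (e : E) (b σ : ℝ) : MeasurableSet (coordEllipsoid e b σ) :=
  measurableSet_lt (by fun_prop) (by fun_prop)

theorem chordIntegral_maxGap {S : Set ℝ} (he : ‖e‖ = 1) (hK : MeasurableSet K)
    (hS : MeasurableSet S) (hd : 0 ≤ d) (x : ℝ) :
    chordIntegral e K (shell E S) (fun v s ↦ maxGap d (v - x) s) =
      ∫⁻ r in Ioo d 1 ×ˢ S, volume (K ∩ (x • e +ᵥ coordEllipsoid e r.1 r.2)) := by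
  set P : Set (E × ℝ × ℝ) := {q | q.1 ∈ x • e +ᵥ coordEllipsoid e q.2.1 q.2.2}
  have hP : MeasurableSet P := by
    simp only [P, mem_smul_vadd_coordEllipsoid he]
    exact measurableSet_lt (by fun_prop) (by fun_prop)
  have hP₁ (y : E) : MeasurableSet (Prod.mk y ⁻¹' P) := measurable_prodMk_left hP
  calc
    _ = ∫⁻ y in K, ∫⁻ s, S.indicator 1 (‖y‖ ^ 2 - ⟪e, y⟫ ^ 2 + s ^ 2) *
          ENNReal.ofReal (maxGap d (⟪e, y⟫ - x) s) := by
      rw [← lintegral_indicator hK]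
      refine lintegral_congr fun y ↦ ?_
      by_cases hy : y ∈ K <;> simp [hy, indicator_shell_setCoord he]
    _ = ∫⁻ y in K, (volume.restrict (Ioo d 1 ×ˢ S)) (Prod.mk y ⁻¹' P) := by
      refine lintegral_congr fun y ↦ ?_
      rw [lintegral_mul_maxGap hS hd, Measure.volume_eq_prod, ← Measure.prod_restrict,
        Measure.prod_apply (hP₁ y)]
      refine lintegral_congr fun b ↦ ?_
      rw [Measure.restrict_apply (measurable_prodMk_left (hP₁ y))]
      simp only [P, mem_smul_vadd_coordEllipsoid he]
      rfl
    _ = _ := by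
      rw [← Measure.prod_apply hP, Measure.prod_apply_symm hP]
      refine lintegral_congr fun r ↦ ?_
      rw [Measure.restrict_apply (measurable_prodMk_right hP), inter_comm]
      rfl

theorem chordIntegral_maxGap_le {S : Set ℝ} (he : ‖e‖ = 1) (hK : Convex ℝ K) (hK' : -K = K)
    (hKm : MeasurableSet K) (hS : MeasurableSet S) (hd : 0 ≤ d) (x : ℝ) :
    chordIntegral e K (shell E S) (fun v s ↦ maxGap d (v - x) s) ≤
      chordIntegral e K (shell E S) (maxGap d) := by
  have h₀ := chordIntegral_maxGap he hKm hS hd 0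
  simp only [sub_zero, zero_smul, zero_vadd] at h₀
  rw [chordIntegral_maxGap he hKm hS hd x, h₀]
  refine setLIntegral_mono' (measurableSet_Ioo.prod hS) fun r hr ↦ ?_
  have hb : |r.1| ≤ 1 := abs_le.2 ⟨by linarith [hr.1.1], hr.1.2.le⟩
  exact volume_inter_vadd_le hK (convex_coordEllipsoid e hb r.2) hKm
    (measurableSet_coordEllipsoid e r.1 r.2) hK' (neg_coordEllipsoid e r.1 r.2) _

theorem chordIntegral_maxGap_ne_top {S : Set ℝ} (he : ‖e‖ = 1) (hKm : MeasurableSet K)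
    (hS : MeasurableSet S) (hS' : Bornology.IsBounded S) (hd : 0 ≤ d) :
    chordIntegral e K (shell E S) (maxGap d) ≠ ∞ := by
  obtain ⟨R, hR⟩ := hS'.bddAbove
  have h₀ := chordIntegral_maxGap he hKm hS hd 0
  simp only [sub_zero, zero_smul, zero_vadd] at h₀
  rw [h₀]
  have hbound : ∫⁻ r in Ioo d 1 ×ˢ S, volume (K ∩ coordEllipsoid e r.1 r.2) ≤
      ∫⁻ _ in Ioo d 1 ×ˢ S, volume (Metric.closedBall (0 : E) (√R)) := by
    refine setLIntegral_mono' (measurableSet_Ioo.prod hS) fun r hr ↦ measure_mono ?_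
    have hb : |r.1| ≤ 1 := abs_le.2 ⟨by linarith [hr.1.1], hr.1.2.le⟩
    exact inter_subset_right.trans ((coordEllipsoid_subset_ball e hb r.2).trans
      (Metric.closedBall_subset_closedBall (Real.sqrt_le_sqrt (hR hr.2))))
  rw [setLIntegral_const] at hbound
  exact ne_top_of_le_ne_top (ENNReal.mul_ne_top measure_closedBall_lt_top.ne
    ((Metric.isBounded_Ioo d 1).prod hS').measure_lt_top.ne) hbound

theorem chordIntegral_add_comp_neg {S : Set ℝ} (he : ‖e‖ = 1) (hK : MeasurableSet K)
    (hS : MeasurableSet S) (hw : Measurable w.uncurry) (hw₀ : ∀ v s, 0 ≤ w v s) :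
    chordIntegral e K (shell E S) (fun v s ↦ w v s + w v (-s)) =
      2 * chordIntegral e K (shell E S) w := by
  rw [chordIntegral_add hK (measurableSet_shell hS) hw hw₀ fun v s ↦ hw₀ v (-s),
    chordIntegral_comp_neg he, two_mul]

theorem chordIntegral_tent_add_maxGap {S : Set ℝ} (he : ‖e‖ = 1) (hK : MeasurableSet K)
    (hS : MeasurableSet S) (hd₀ : 0 ≤ d) (hd₁ : d ≤ 1) (x c y z : ℝ) :
    chordIntegral e K (shell E S) (fun v s ↦ tent x (v - c * s) + tent x (v - c * -s) +
        (maxGap d (v - y) s + maxGap d (v - z) s)) =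
      2 * chordIntegral e K (shell E S) (fun v s ↦ tent x (v - c * s)) +
        (chordIntegral e K (shell E S) (fun v s ↦ maxGap d (v - y) s) +
          chordIntegral e K (shell E S) fun v s ↦ maxGap d (v - z) s) := by
  have hgap (y v s : ℝ) : 0 ≤ maxGap d (v - y) s := maxGap_nonneg hd₀ hd₁
  have hgap_meas : Measurable (fun v s ↦ maxGap d (v - y) s).uncurry := by
    unfold maxGap
    fun_prop
  have htent_meas : Measurable (fun v s ↦ tent x (v - c * s)).uncurry := by
    unfold tent
    fun_prop
  have htents_meas : Measurable (fun v s ↦ tent x (v - c * s) + tent x (v - c * -s)).uncurry := by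
    unfold tent
    fun_prop
  rw [chordIntegral_add hK (measurableSet_shell hS) htents_meas
    (fun v s ↦ add_nonneg tent_nonneg tent_nonneg)
    (fun v s ↦ add_nonneg (hgap y v s) (hgap z v s)),
    chordIntegral_add hK (measurableSet_shell hS) hgap_meas (hgap y) (hgap z)]
  congr 1
  exact chordIntegral_add_comp_neg he hK hS htent_meas fun _ _ ↦ tent_nonneg

theorem chordIntegral_tent_le {S : Set ℝ} (he : ‖e‖ = 1) (hK : Convex ℝ K) (hK' : -K = K)
    (hKm : MeasurableSet K) (hS : MeasurableSet S) (hS' : Bornology.IsBounded S) (hd₀ : 0 ≤ d)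
    (hd₁ : d ≤ 1) (x : ℝ) :
    chordIntegral e K (shell E S) (fun v s ↦ tent x (v - s)) ≤
      chordIntegral e K (shell E S) (fun v s ↦ tent x (v - d * s)) := by
  have hexpand := chordIntegral_tent_add_maxGap he hKm hS hd₀ hd₁ x
  set Φ := chordIntegral e K (shell E S)
  have hdiff : 2 * Φ (fun v s ↦ tent x (v - s)) + 2 * Φ (maxGap d) ≤
      2 * Φ (fun v s ↦ tent x (v - d * s)) + 2 * Φ (maxGap d) := calc
    _ = Φ (fun v s ↦ tent x (v - 1 * s) + tent x (v - 1 * -s) +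
          (maxGap d (v - 0) s + maxGap d (v - 0) s)) := by
      rw [hexpand]
      simp only [one_mul, sub_zero, two_mul]
    _ = Φ (fun v s ↦ tent x (v - d * s) + tent x (v - d * -s) +
          (maxGap d (v - -x) s + maxGap d (v - x) s)) := by
      simp only [one_mul, sub_zero, mul_neg, sub_neg_eq_add, tent_add_maxGap (x := x) (d := d)]
    _ = _ := hexpand d (-x) x
    _ ≤ _ := by
      rw [two_mul (Φ (maxGap d))]
      gcongr <;> exact chordIntegral_maxGap_le he hK hK' hKm hS hd₀ _
  have hfin : 2 * Φ (maxGap d) ≠ ∞ :=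
    ENNReal.mul_ne_top ENNReal.ofNat_ne_top (chordIntegral_maxGap_ne_top he hKm hS hS' hd₀)
  rw [ENNReal.add_le_add_iff_right hfin,
    ENNReal.mul_le_mul_iff_right two_ne_zero ENNReal.ofNat_ne_top] at hdiff
  exact hdiff

theorem chordIntegral_tent_eq (he : ‖e‖ = 1) (hK : MeasurableSet K) (hB : MeasurableSet B)
    (x d : ℝ) :
    chordIntegral e K B (fun v s ↦ tent x (v - d * s)) =
      ∫⁻ z in B, ∫⁻ u, K.indicator 1 (scaleCoord e d z + u • e) * ENNReal.ofReal (tent x u) := by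
  have hw : Measurable (fun v s ↦ tent x (v - d * s)).uncurry := by
    unfold tent
    fun_prop
  rw [chordIntegral_eq he hK hB hw]
  refine lintegral_congr fun z ↦ ?_
  rw [← lintegral_add_left_eq_self _ (d * ⟪e, z⟫)]
  simp only [setCoord_mul_add, add_sub_cancel_left]

theorem lintegral_indicator_mul_tent {L : Set E} (hL : MeasurableSet L) (B : Set E) (x : ℝ) :
    ∫⁻ z in B, ∫⁻ u, L.indicator 1 z * ENNReal.ofReal (tent x u) =
      volume (B ∩ L) * ∫⁻ u, ENNReal.ofReal (tent x u) := by
  have hm : Measurable (L.indicator (1 : E → ℝ≥0∞)) := measurable_one.indicator hL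
  simp only [lintegral_const_mul _ measurable_tent.ennreal_ofReal]
  rw [lintegral_mul_const _ hm, lintegral_indicator_one hL, Measure.restrict_apply hL, inter_comm]

theorem volume_inter_mul_le_chordIntegral_tent {L : Set E} {x : ℝ} (he : ‖e‖ = 1)
    (hK : MeasurableSet K) (hB : MeasurableSet B) (hL : MeasurableSet L)
    (h : ∀ z ∈ L, ∀ u : ℝ, |u| < |x| → scaleCoord e d z + u • e ∈ K) :
    volume (B ∩ L) * ∫⁻ u, ENNReal.ofReal (tent x u) ≤
      chordIntegral e K B (fun v s ↦ tent x (v - d * s)) := by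
  rw [chordIntegral_tent_eq he hK hB, ← lintegral_indicator_mul_tent hL B]
  refine lintegral_mono fun z ↦ lintegral_mono fun u ↦ ?_
  rcases le_or_gt |x| |u| with hu | hu
  · simp [tent_eq_zero hu]
  · gcongr
    by_cases hz : z ∈ L
    · simp [hz, h z hz u hu]
    · simp [hz]

theorem chordIntegral_tent_le_volume_inter_mul {L : Set E} {x : ℝ} (he : ‖e‖ = 1)
    (hK : MeasurableSet K) (hB : MeasurableSet B) (hL : MeasurableSet L)
    (h : ∀ z, ∀ u : ℝ, |u| < |x| → scaleCoord e d z + u • e ∈ K → z ∈ L) :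
    chordIntegral e K B (fun v s ↦ tent x (v - d * s)) ≤
      volume (B ∩ L) * ∫⁻ u, ENNReal.ofReal (tent x u) := by
  rw [chordIntegral_tent_eq he hK hB, ← lintegral_indicator_mul_tent hL B]
  refine lintegral_mono fun z ↦ lintegral_mono fun u ↦ ?_
  rcases le_or_gt |x| |u| with hu | hu
  · simp [tent_eq_zero hu]
  · gcongr
    by_cases hz : scaleCoord e d z + u • e ∈ K
    · simp [hz, h z u hu hz]
    · simp [hz]

theorem le_measure_sublevel {α : Type*} [MeasurableSpace α] {m : Measure α} [IsFiniteMeasure m]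
    {f : α → ℝ} (hf : Measurable f) {a : ℝ≥0∞} {c : ℝ}
    (h : ∀ δ > 0, a ≤ m {z | f z ≤ c + δ}) : a ≤ m {z | f z ≤ c} := by
  have hlim := tendsto_measure_biInter_gt (μ := m) (s := fun r ↦ {z | f z ≤ r}) (a := c)
    (fun r _ ↦ (measurableSet_le hf measurable_const).nullMeasurableSet)
    (fun i j _ hij z hz ↦ le_trans hz hij) ⟨c + 1, lt_add_one c, measure_ne_top m _⟩
  have hinter : ⋂ r > c, {z | f z ≤ r} = {z | f z ≤ c} := by
    ext z
    simpa using forall_gt_imp_ge_iff_le_of_dense (a₁ := f z) (a₂ := c)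
  rw [hinter] at hlim
  refine ge_of_tendsto hlim (Filter.eventually_of_mem self_mem_nhdsWithin fun r hr ↦ ?_)
  simpa using h (r - c) (sub_pos.2 hr)

theorem measurable_seminorm (p : Seminorm ℝ E) : Measurable p :=
  (continuousOn_univ.1 (p.convexOn.continuousOn isOpen_univ)).measurable

theorem measurableSet_seminorm_le (p : Seminorm ℝ E) (c : ℝ) : MeasurableSet {z | p z ≤ c} :=
  measurableSet_le (measurable_seminorm p) measurable_const

theorem volume_shell_inter_seminorm_le_add {S : Set ℝ} (he : ‖e‖ = 1) (hS : MeasurableSet S)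
    (hS' : Bornology.IsBounded S) (hd₀ : 0 ≤ d) (hd₁ : d ≤ 1) (p : Seminorm ℝ E) (c : ℝ) {x : ℝ}
    (hx : 0 < x) :
    volume (shell E S ∩ {z | p z ≤ c}) ≤
      volume (shell E S ∩ {z | p (scaleCoord e d z) ≤ c + 2 * (x * p e)}) := by
  set K := {z | p z ≤ c + x * p e}
  have hK : Convex ℝ K := by simpa using p.convexOn.convex_le (c + x * p e)
  have hK' : -K = K := by ext; simp [K]
  have hKm : MeasurableSet K := measurableSet_seminorm_le p _
  have hLm : MeasurableSet {z | p (scaleCoord e d z) ≤ c + 2 * (x * p e)} :=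
    measurableSet_seminorm_le (p.comp (scaleCoord e d)) _
  have hSm := measurableSet_shell (E := E) hS
  have hshift {u : ℝ} (hu : |u| < |x|) : p (u • e) ≤ x * p e := by
    rw [map_smul_eq_mul, Real.norm_eq_abs]
    exact mul_le_mul_of_nonneg_right (hu.le.trans (abs_of_pos hx).le) (apply_nonneg p e)
  have hlower : ∀ z ∈ {z | p z ≤ c}, ∀ u : ℝ, |u| < |x| → scaleCoord e 1 z + u • e ∈ K :=
    fun z hz u hu ↦ by
      rw [scaleCoord_apply, sub_self, zero_mul, zero_smul, sub_zero]
      exact (map_add_le_add p _ _).trans (add_le_add hz (hshift hu))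
  have hupper : ∀ z, ∀ u : ℝ, |u| < |x| → scaleCoord e d z + u • e ∈ K →
      z ∈ {z | p (scaleCoord e d z) ≤ c + 2 * (x * p e)} := fun z u hu hz ↦ by
    have := map_sub_le_add p (scaleCoord e d z + u • e) (u • e)
    rw [add_sub_cancel_right] at this
    simp only [K, mem_ofPred_eq] at hz ⊢
    linarith [hshift hu]
  refine (ENNReal.mul_le_mul_iff_left (lintegral_tent_ne_zero hx) lintegral_tent_ne_top).1 ?_
  calc
    _ ≤ chordIntegral e K (shell E S) (fun v s ↦ tent x (v - 1 * s)) :=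
      volume_inter_mul_le_chordIntegral_tent he hKm hSm (measurableSet_seminorm_le p c) hlower
    _ ≤ chordIntegral e K (shell E S) (fun v s ↦ tent x (v - d * s)) := by
      simpa only [one_mul] using chordIntegral_tent_le he hK hK' hKm hS hS' hd₀ hd₁ x
    _ ≤ _ := chordIntegral_tent_le_volume_inter_mul he hKm hSm hLm hupper

theorem volume_shell_lt_top {S : Set ℝ} (hS : Bornology.IsBounded S) : volume (shell E S) < ∞ := by
  obtain ⟨R, hR⟩ := hS.bddAbove
  have hsub : shell E S ⊆ Metric.closedBall 0 (√R) := fun z hz ↦ by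
    simpa using Real.le_sqrt_of_sq_le (hR hz)
  exact (measure_mono hsub).trans_lt measure_closedBall_lt_top

theorem volume_shell_inter_seminorm_le_scaleCoord {S : Set ℝ} (he : ‖e‖ = 1)
    (hS : MeasurableSet S) (hS' : Bornology.IsBounded S) (hd₀ : 0 ≤ d) (hd₁ : d ≤ 1)
    (p : Seminorm ℝ E) (c : ℝ) :
    volume (shell E S ∩ {z | p z ≤ c}) ≤ volume (shell E S ∩ {z | p (scaleCoord e d z) ≤ c}) := by
  have hfin : IsFiniteMeasure (volume.restrict (shell E S)) :=
    isFiniteMeasure_restrict.2 (volume_shell_lt_top hS').ne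
  have hrestrict {c : ℝ} : volume (shell E S ∩ {z | p (scaleCoord e d z) ≤ c}) =
      volume.restrict (shell E S) {z | p (scaleCoord e d z) ≤ c} := by
    rw [Measure.restrict_apply' (measurableSet_shell hS), inter_comm]
  rw [hrestrict]
  refine le_measure_sublevel (measurable_seminorm (p.comp (scaleCoord e d))) fun δ hδ ↦ ?_
  have hx : 0 < δ / (2 * (p e + 1)) := div_pos hδ (by linarith [apply_nonneg p e])
  simp only [Seminorm.comp_apply, ← hrestrict]
  refine (volume_shell_inter_seminorm_le_add he hS hS' hd₀ hd₁ p c hx).trans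
    (measure_mono (inter_subset_inter_right _ fun z hz ↦ (mem_ofPred.1 hz).trans ?_))
  have := apply_nonneg p e
  have : 2 * (δ / (2 * (p e + 1)) * p e) ≤ δ := by
    field_simp
    nlinarith
  linarith

theorem volume_shell_inter_seminorm_le_scaleBasis {ι : Type*} [Fintype ι]
    (b : OrthonormalBasis ι ℝ E) {S : Set ℝ} (hS : MeasurableSet S)
    (hS' : Bornology.IsBounded S) {d : ι → ℝ} (hd₀ : ∀ i, 0 ≤ d i) (hd₁ : ∀ i, d i ≤ 1)
    (p : Seminorm ℝ E) (c : ℝ) :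
    volume (shell E S ∩ {z | p z ≤ c}) ≤ volume (shell E S ∩ {z | p (scaleBasis b d z) ≤ c}) := by
  classical
  suffices ∀ s : Finset ι, volume (shell E S ∩ {z | p z ≤ c}) ≤
      volume (shell E S ∩ {z | p (scaleBasis b (s.piecewise d 1) z) ≤ c}) by
    simpa using this Finset.univ
  intro s
  induction s using Finset.induction_on with
  | empty => simp [scaleBasis_one]
  | insert k s hk ih =>
    rw [scaleBasis_piecewise_insert b hk]
    exact ih.trans (volume_shell_inter_seminorm_le_scaleCoord (b.norm_eq_one k) hS hS' (hd₀ k)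
      (hd₁ k) (p.comp (scaleBasis b (s.piecewise d 1))) c)

end CoordinateContraction

section SphericalLaws

variable {E : Type*} [NormedAddCommGroup E] [InnerProductSpace ℝ E] [MeasurableSpace E]

/-- A measure whose characteristic function depends only on the norm; for finite Borel measures on
a Euclidean space this is rotation invariance. -/
def IsSpherical (m : Measure E) : Prop := ∀ s t, ‖s‖ = ‖t‖ → charFun m s = charFun m t

variable [BorelSpace E] [FiniteDimensional ℝ E]

theorem isSpherical_volume_restrict_shell (S : Set ℝ) :
    IsSpherical (volume.restrict (shell E S)) := by
  intro s t hst
  set L := (ℝ ∙ (s - t))ᗮ.reflection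
  have hLs : L s = t := Submodule.reflection_sub hst
  have hpre : L ⁻¹' shell E S = shell E S := by
    ext x
    simp [shell]
  simp only [charFun_apply]
  symm
  rw [← L.measurePreserving.setIntegral_preimage_emb L.toMeasurableEquiv.measurableEmbedding, hpre]
  simp only [← hLs, L.inner_map_map]

theorem charFun_map_norm_smul {m σ : Measure E} [IsFiniteMeasure m] [IsFiniteMeasure σ] (t : E) :
    charFun ((m.prod σ).map fun q ↦ ‖q.1‖ • q.2) t = ∫ z, charFun σ (‖z‖ • t) ∂m := by
  rw [charFun_apply, integral_map (by fun_prop) (by fun_prop), integral_prod]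
  · simp only [charFun_apply, inner_smul_left, inner_smul_right]
    rfl
  · refine Integrable.of_bound (by fun_prop) 1 (.of_forall fun q ↦ ?_)
    rw [Complex.norm_exp_ofReal_mul_I]

theorem IsSpherical.map_norm_smul_comm {m σ : Measure E} [IsFiniteMeasure m] [IsFiniteMeasure σ]
    (hm : IsSpherical m) (hσ : IsSpherical σ) :
    (m.prod σ).map (fun q ↦ ‖q.1‖ • q.2) = (m.prod σ).map (fun q ↦ ‖q.2‖ • q.1) := by
  have hswap : (m.prod σ).map (fun q ↦ ‖q.2‖ • q.1) = (σ.prod m).map fun q ↦ ‖q.1‖ • q.2 := by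
    rw [← Measure.prod_swap, Measure.map_map (by fun_prop) measurable_swap]
    rfl
  rw [hswap]
  refine Measure.ext_of_charFun (funext fun t ↦ ?_)
  rw [charFun_map_norm_smul, charFun_map_norm_smul]
  calc
    ∫ z, charFun σ (‖z‖ • t) ∂m = ∫ z, charFun σ (‖t‖ • z) ∂m :=
      integral_congr_ae (.of_forall fun z ↦ hσ _ _ (by simp [norm_smul, mul_comm]))
    _ = ∫ w, charFun m (‖t‖ • w) ∂σ := by
      simp only [charFun_apply]
      rw [integral_integral_swap]
      · simp only [inner_smul_right, real_inner_comm]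
      · refine Integrable.of_bound (by fun_prop) 1 (.of_forall fun q ↦ ?_)
        exact (Complex.norm_exp_ofReal_mul_I _).le
    _ = ∫ w, charFun m (‖w‖ • t) ∂σ :=
      integral_congr_ae (.of_forall fun w ↦ hm _ _ (by simp [norm_smul, mul_comm]))

theorem IsSpherical.prod_norm_mul_seminorm_le {m σ : Measure E} [IsFiniteMeasure m]
    [IsFiniteMeasure σ] (hm : IsSpherical m) (hσ : IsSpherical σ) (p : Seminorm ℝ E) (c : ℝ) :
    m.prod σ {q | ‖q.1‖ * p q.2 ≤ c} = m.prod σ {q | ‖q.2‖ * p q.1 ≤ c} := by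
  have h := congr($(hm.map_norm_smul_comm hσ) {z | p z ≤ c})
  rw [Measure.map_apply (by fun_prop) (measurableSet_seminorm_le p c),
    Measure.map_apply (by fun_prop) (measurableSet_seminorm_le p c)] at h
  simpa [preimage, map_smul_eq_mul] using h

theorem volume_shell_Ioo_pos [Nontrivial E] {r : ℝ} (hr : 1 < r) :
    0 < volume (shell E (Ioo 1 r)) := by
  have hopen : IsOpen (shell E (Ioo 1 r)) := isOpen_Ioo.preimage (continuous_norm.pow 2)
  obtain ⟨z, hz⟩ := exists_norm_eq E (Real.sqrt_nonneg ((1 + r) / 2))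
  refine hopen.measure_pos _ ⟨z, ?_⟩
  rw [shell, mem_ofPred_eq, hz, Real.sq_sqrt (by linarith)]
  constructor <;> linarith

variable {ι : Type*} [Fintype ι] (b : OrthonormalBasis ι ℝ E) {d : ι → ℝ} {m : Measure E}
  [IsFiniteMeasure m]

theorem IsSpherical.prod_shell_seminorm_le_scaleBasis (hm : IsSpherical m) (hd₀ : ∀ i, 0 ≤ d i)
    (hd₁ : ∀ i, d i ≤ 1) {S : Set ℝ} (hS : MeasurableSet S) (hS' : Bornology.IsBounded S)
    (p : Seminorm ℝ E) (c : ℝ) :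
    m.prod (volume.restrict (shell E S)) {q | ‖q.2‖ * p q.1 ≤ c} ≤
      m.prod (volume.restrict (shell E S)) {q | ‖q.2‖ * p (scaleBasis b d q.1) ≤ c} := by
  set σ : Measure E := volume.restrict (shell E S)
  have hσ : IsSpherical σ := isSpherical_volume_restrict_shell S
  have : IsFiniteMeasure σ := isFiniteMeasure_restrict.2 (volume_shell_lt_top hS').ne
  have hmeas (p : Seminorm ℝ E) : MeasurableSet {q : E × E | ‖q.1‖ * p q.2 ≤ c} :=
    measurableSet_le (by have := measurable_seminorm p; fun_prop) measurable_const
  refine (hm.prod_norm_mul_seminorm_le hσ p c).symm.trans_le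
    (le_trans ?_ (hm.prod_norm_mul_seminorm_le hσ (p.comp (scaleBasis b d)) c).le)
  rw [Measure.prod_apply (hmeas _), Measure.prod_apply (hmeas _)]
  refine lintegral_mono fun z ↦ ?_
  simp only [σ, Measure.restrict_apply' (measurableSet_shell hS), inter_comm _ (shell E S)]
  exact volume_shell_inter_seminorm_le_scaleBasis b hS hS' hd₀ hd₁ (‖z‖₊ • p) c

theorem IsSpherical.seminorm_le_scaleBasis_mul [Nontrivial E] (hm : IsSpherical m)
    (hd₀ : ∀ i, 0 ≤ d i) (hd₁ : ∀ i, d i ≤ 1) (p : Seminorm ℝ E) (c : ℝ) {r : ℝ} (hr : 1 < r) :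
    m {z | p z ≤ c} ≤ m {z | p (scaleBasis b d z) ≤ r * c} := by
  have hS := measurableSet_shell (E := E) (measurableSet_Ioo (a := 1) (b := r))
  have hS_fin := volume_shell_lt_top (E := E) (Metric.isBounded_Ioo 1 r)
  set σ : Measure E := volume.restrict (shell E (Ioo 1 r))
  have hσ : σ univ = volume (shell E (Ioo 1 r)) := Measure.restrict_apply_univ _
  have hae : ∀ᵐ q ∂m.prod σ, q.2 ∈ shell E (Ioo 1 r) :=
    Measure.quasiMeasurePreserving_snd.ae (ae_restrict_mem hS)
  refine (ENNReal.mul_le_mul_iff_left (c := σ univ) (hσ ▸ (volume_shell_Ioo_pos hr).ne')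
    (hσ ▸ hS_fin.ne)).1 ?_
  calc
    m {z | p z ≤ c} * σ univ = m.prod σ ({z | p z ≤ c} ×ˢ univ) := (Measure.prod_prod _ _).symm
    _ ≤ m.prod σ {q | ‖q.2‖ * p q.1 ≤ r * c} := by
      refine measure_mono_ae (hae.mono fun q hq hqc ↦ ?_)
      have hqr : ‖q.2‖ ≤ r := by nlinarith [hq.1, hq.2, norm_nonneg q.2]
      exact mul_le_mul hqr hqc.1 (apply_nonneg p _) (by linarith)
    _ ≤ m.prod σ {q | ‖q.2‖ * p (scaleBasis b d q.1) ≤ r * c} :=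
      hm.prod_shell_seminorm_le_scaleBasis b hd₀ hd₁ measurableSet_Ioo
        (Metric.isBounded_Ioo 1 r) p _
    _ ≤ m.prod σ ({z | p (scaleBasis b d z) ≤ r * c} ×ˢ univ) := by
      refine measure_mono_ae (hae.mono fun q hq hqc ↦ ⟨?_, trivial⟩)
      have hq₁ : 1 ≤ ‖q.2‖ := by nlinarith [hq.1, norm_nonneg q.2]
      exact (le_mul_of_one_le_left (apply_nonneg p _) hq₁).trans hqc
    _ = _ := Measure.prod_prod _ _

theorem IsSpherical.seminorm_le_scaleBasis (hm : IsSpherical m) (hd₀ : ∀ i, 0 ≤ d i)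
    (hd₁ : ∀ i, d i ≤ 1) (p : Seminorm ℝ E) (c : ℝ) :
    m {z | p z ≤ c} ≤ m {z | p (scaleBasis b d z) ≤ c} := by
  cases subsingleton_or_nontrivial E
  · exact (congrArg m (ext fun z ↦ by simp [Subsingleton.elim z 0])).le
  refine le_measure_sublevel (measurable_seminorm (p.comp (scaleBasis b d))) fun δ hδ ↦ ?_
  have hr : 1 < 1 + δ / (|c| + 1) := lt_add_of_pos_right 1 (by positivity)
  refine (hm.seminorm_le_scaleBasis_mul b hd₀ hd₁ p c hr).trans (measure_mono fun z hz ↦ ?_)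
  have hδc : δ / (|c| + 1) * c ≤ δ := by
    rw [div_mul_eq_mul_div, div_le_iff₀ (by positivity)]
    exact mul_le_mul_of_nonneg_left ((le_abs_self c).trans (lt_add_one _).le) hδ.le
  have hzc : p (scaleBasis b d z) ≤ (1 + δ / (|c| + 1)) * c := hz
  change p (scaleBasis b d z) ≤ c + δ
  linarith

end SphericalLaws

section EllipticalLaws

variable {E F F' : Type*}
  [NormedAddCommGroup E] [InnerProductSpace ℝ E] [FiniteDimensional ℝ E]
  [NormedAddCommGroup F] [InnerProductSpace ℝ F]

theorem adjoint_scaleBasis {ι : Type*} [Fintype ι] (b : OrthonormalBasis ι ℝ E) (d : ι → ℝ) :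
    (scaleBasis b d).adjoint = scaleBasis b d := by
  classical
  refine ((LinearMap.eq_adjoint_iff_basis b.toBasis b.toBasis _ _).2 fun i j ↦ ?_).symm
  simp only [b.coe_toBasis, scaleBasis_apply_self, real_inner_smul_left, inner_smul_right]
  rcases eq_or_ne i j with rfl | hij
  · rfl
  · simp [b.inner_eq_zero hij]

theorem exists_norm_scaleBasis_eq [FiniteDimensional ℝ F] {V : E →ₗ[ℝ] F} (hV : ∀ x, ‖V x‖ ≤ ‖x‖) :
    ∃ (b : OrthonormalBasis (Fin (finrank ℝ E)) ℝ E) (d : Fin (finrank ℝ E) → ℝ),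
      (∀ i, 0 ≤ d i) ∧ (∀ i, d i ≤ 1) ∧ ∀ x, ‖scaleBasis b d x‖ = ‖V x‖ := by
  have hsymm := V.isPositive_adjoint_comp_self.isSymmetric
  set b := hsymm.eigenvectorBasis rfl
  set d : Fin (finrank ℝ E) → ℝ := fun i ↦ V.singularValues i
  have hgram : (scaleBasis b d).adjoint ∘ₗ scaleBasis b d = V.adjoint ∘ₗ V := by
    refine b.toBasis.ext fun i ↦ ?_
    have heigen : (V.adjoint ∘ₗ V) (b i) = hsymm.eigenvalues rfl i • b i :=
      hsymm.apply_eigenvectorBasis rfl i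
    rw [b.coe_toBasis, heigen, adjoint_scaleBasis, LinearMap.comp_apply, scaleBasis_apply_self,
      map_smul, scaleBasis_apply_self, smul_smul, ← sq]
    congr 1
    exact V.sq_singularValues_fin rfl i
  have hnorm (x : E) : ‖scaleBasis b d x‖ = ‖V x‖ := by
    rw [← sq_eq_sq₀ (norm_nonneg _) (norm_nonneg _), ← real_inner_self_eq_norm_sq,
      ← real_inner_self_eq_norm_sq, ← LinearMap.adjoint_inner_right, ← LinearMap.comp_apply, hgram,
      LinearMap.comp_apply, LinearMap.adjoint_inner_right]
  have hd₀ (i) : 0 ≤ d i := V.singularValues_nonneg i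
  refine ⟨b, d, hd₀, fun i ↦ ?_, hnorm⟩
  have := (hnorm (b i)).trans_le (hV (b i))
  rwa [scaleBasis_apply_self, norm_smul, b.norm_eq_one, mul_one, Real.norm_of_nonneg (hd₀ i)]
    at this

variable [MeasurableSpace E] [BorelSpace E]

theorem charFun_map_linearMap [FiniteDimensional ℝ F] [MeasurableSpace F] [BorelSpace F]
    (m : Measure E) (L : E →ₗ[ℝ] F) (t : F) :
    charFun (m.map L) t = charFun m (L.adjoint t) := by
  have hL : Measurable L := L.continuous_of_finiteDimensional.measurable
  rw [charFun_apply, charFun_apply, integral_map hL.aemeasurable (by fun_prop)]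
  simp only [LinearMap.adjoint_inner_right]

variable [NormedAddCommGroup F'] [InnerProductSpace ℝ F'] [FiniteDimensional ℝ F']
  {φ : ℝ → ℂ} {m m' : Measure E} [IsFiniteMeasure m] [IsFiniteMeasure m']
  {R : E →ₗ[ℝ] F} {Q : E →ₗ[ℝ] F'}

theorem measure_seminorm_le_of_surjective [FiniteDimensional ℝ F] [MeasurableSpace F] [BorelSpace F]
    (hR : Function.Surjective R) (hQR : ∀ t, ‖Q t‖ ≤ ‖R t‖) (hm : ∀ t, charFun m t = φ ‖R t‖)
    (hm' : ∀ t, charFun m' t = φ ‖Q t‖) (p : Seminorm ℝ E) (c : ℝ) :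
    m {x | p x ≤ c} ≤ m' {x | p x ≤ c} := by
  obtain ⟨G, hG⟩ := R.exists_rightInverse_of_surjective (LinearMap.range_eq_top.2 hR)
  have hRG (h : F) : R (G h) = h := congr($hG h)
  have hQG (t : E) : Q (G (R t)) = Q t := by
    rw [← sub_eq_zero, ← map_sub, ← norm_le_zero_iff]
    refine (hQR _).trans_eq ?_
    rw [map_sub, hRG, sub_self, norm_zero]
  obtain ⟨b, d, hd₀, hd₁, hbd⟩ :=
    exists_norm_scaleBasis_eq (V := Q ∘ₗ G) fun h ↦ (hQR _).trans_eq (by rw [hRG])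
  set Z : Measure F := m.map G.adjoint
  have hZ (h : F) : charFun Z h = φ ‖h‖ := by
    rw [charFun_map_linearMap, LinearMap.adjoint_adjoint, hm, hRG]
  have hZ_spherical : IsSpherical Z := fun s t hst ↦ by rw [hZ, hZ, hst]
  have hm_eq : m = Z.map R.adjoint := Measure.ext_of_charFun <| funext fun t ↦ by
    rw [charFun_map_linearMap, LinearMap.adjoint_adjoint, hZ, hm]
  have hm'_eq : m' = Z.map (R.adjoint ∘ₗ scaleBasis b d) :=
    Measure.ext_of_charFun <| funext fun t ↦ by
      rw [charFun_map_linearMap, LinearMap.adjoint_comp, LinearMap.adjoint_adjoint,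
        adjoint_scaleBasis, hZ, hm', LinearMap.comp_apply, hbd, LinearMap.comp_apply, hQG]
  have hmeas (L : F →ₗ[ℝ] E) : Measurable L := L.continuous_of_finiteDimensional.measurable
  rw [hm_eq, hm'_eq, Measure.map_apply (hmeas _) (measurableSet_seminorm_le p c),
    Measure.map_apply (hmeas _) (measurableSet_seminorm_le p c)]
  exact hZ_spherical.seminorm_le_scaleBasis b hd₀ hd₁ (p.comp R.adjoint) c

theorem measure_seminorm_le_of_norm_le (hQR : ∀ t, ‖Q t‖ ≤ ‖R t‖)
    (hm : ∀ t, charFun m t = φ ‖R t‖) (hm' : ∀ t, charFun m' t = φ ‖Q t‖) (p : Seminorm ℝ E)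
    (c : ℝ) : m {x | p x ≤ c} ≤ m' {x | p x ≤ c} := by
  borelize ↥R.range
  exact measure_seminorm_le_of_surjective R.surjective_rangeRestrict hQR hm hm' p c

end EllipticalLaws

section EllipticalVectors

variable {ι : Type*} [Fintype ι]

open scoped MatrixOrder in
theorem exists_norm_sq_eq_of_posSemidef {S : Matrix ι ι ℝ} (hS : S.PosSemidef) :
    ∃ B : (ι → ℝ) →ₗ[ℝ] EuclideanSpace ℝ ι, ∀ t, ‖B t‖ ^ 2 = t ⬝ᵥ S *ᵥ t := by
  classical
  obtain ⟨B, rfl⟩ := CStarAlgebra.nonneg_iff_eq_star_mul_self.mp hS.nonneg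
  refine ⟨(WithLp.linearEquiv 2 ℝ (ι → ℝ)).symm ∘ₗ B.mulVecLin, fun t ↦ ?_⟩
  rw [← mulVec_mulVec, star_eq_conjTranspose, conjTranspose_eq_transpose_of_trivial,
    dotProduct_mulVec, vecMul_transpose, EuclideanSpace.real_norm_sq_eq]
  simp [dotProduct, sq]

variable {Ω : Type*} [MeasurableSpace Ω] {P : Measure Ω}

theorem charFun_map_toLp {X : Ω → ι → ℝ}
    (hX : Measurable X) (t : EuclideanSpace ℝ ι) :
    charFun (P.map fun ω ↦ WithLp.toLp 2 (X ω)) t =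
      ∫ ω, Complex.exp (((t.ofLp ⬝ᵥ X ω : ℝ) : ℂ) * Complex.I) ∂P := by
  rw [charFun_apply, integral_map (by fun_prop) (by fun_prop)]
  rfl

/-- The elliptical law with location `μ`, dispersion matrix `S` and generator `φ`, as a condition
on the characteristic function of the random vector `X`; `S` is not required to be positive
semidefinite here. -/
def IsElliptical {n : ℕ} (P : Measure Ω) (X : Ω → Fin n → ℝ) (μ : Fin n → ℝ)
    (S : Matrix (Fin n) (Fin n) ℝ) (φ : ℝ → ℂ) : Prop :=
  ∀ t : Fin n → ℝ,
    charFn P X t = Complex.exp (((∑ i, t i * μ i : ℝ) : ℂ) * Complex.I) * φ (t ⬝ᵥ S *ᵥ t)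

variable {n : ℕ} {X Y : Ω → Fin n → ℝ} {μ : Fin n → ℝ} {S Sx Sy : Matrix (Fin n) (Fin n) ℝ}
  {φ : ℝ → ℂ}

theorem IsElliptical.charFun_map_mulVec_sub (hell : IsElliptical P X μ S φ) (hX : Measurable X)
    (A : Matrix ι (Fin n) ℝ) (t : EuclideanSpace ℝ ι) :
    charFun (P.map fun ω ↦ WithLp.toLp 2 (A *ᵥ (X ω - μ))) t =
      φ ((t.ofLp ᵥ* A) ⬝ᵥ S *ᵥ (t.ofLp ᵥ* A)) := by
  have hAX : Measurable fun ω ↦ A *ᵥ (X ω - μ) := by fun_prop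
  set s := t.ofLp ᵥ* A
  calc charFun (P.map fun ω ↦ WithLp.toLp 2 (A *ᵥ (X ω - μ))) t
    _ = ∫ ω, Complex.exp (((s ⬝ᵥ X ω : ℝ) : ℂ) * Complex.I) *
          Complex.exp (-(((s ⬝ᵥ μ : ℝ) : ℂ) * Complex.I)) ∂P := by
        rw [charFun_map_toLp hAX]
        congr with ω
        rw [dotProduct_mulVec, dotProduct_sub, ← Complex.exp_add, Complex.ofReal_sub, sub_mul,
          sub_eq_add_neg]
    _ = charFn P X s * Complex.exp (-(((s ⬝ᵥ μ : ℝ) : ℂ) * Complex.I)) :=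
        integral_mul_const _ _
    _ = φ (s ⬝ᵥ S *ᵥ s) := by
        rw [hell, mul_right_comm, dotProduct, ← Complex.exp_add, add_neg_cancel, Complex.exp_zero,
          one_mul]

theorem IsElliptical.measure_lt_seminorm_le [IsProbabilityMeasure P]
    (hXell : IsElliptical P X μ Sx φ) (hYell : IsElliptical P Y μ Sy φ)
    (hX : Measurable X) (hY : Measurable Y) (hSx : Sx.PosSemidef) (hSy : Sy.PosSemidef)
    {A : Matrix ι (Fin n) ℝ}
    (hle : ∀ t, (t ᵥ* A) ⬝ᵥ Sx *ᵥ (t ᵥ* A) ≤ (t ᵥ* A) ⬝ᵥ Sy *ᵥ (t ᵥ* A))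
    (p : Seminorm ℝ (ι → ℝ)) (c : ℝ) :
    P {ω | c < p (A *ᵥ (X ω - μ))} ≤ P {ω | c < p (A *ᵥ (Y ω - μ))} := by
  obtain ⟨Bx, hBx⟩ := exists_norm_sq_eq_of_posSemidef hSx
  obtain ⟨By, hBy⟩ := exists_norm_sq_eq_of_posSemidef hSy
  let toFun := (WithLp.linearEquiv 2 ℝ (ι → ℝ)).toLinearMap
  have hlaw {Z : Ω → Fin n → ℝ} (hZ : Measurable Z) :
      Measurable fun ω ↦ WithLp.toLp 2 (A *ᵥ (Z ω - μ)) := by fun_prop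
  have hmeas := measurableSet_seminorm_le (p.comp toFun) c
  have hcompl {Z : Ω → Fin n → ℝ} (hZ : Measurable Z) :
      P {ω | c < p (A *ᵥ (Z ω - μ))} =
        1 - P.map (fun ω ↦ WithLp.toLp 2 (A *ᵥ (Z ω - μ))) {x | p.comp toFun x ≤ c} := by
    rw [Measure.map_apply (hlaw hZ) hmeas, ← prob_compl_eq_one_sub (hlaw hZ hmeas)]
    congr 1 with ω
    exact (not_le (α := ℝ)).symm
  rw [hcompl hX, hcompl hY]
  let R := By ∘ₗ A.vecMulLinear ∘ₗ toFun
  let Q := Bx ∘ₗ A.vecMulLinear ∘ₗ toFun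
  have hQR (t : EuclideanSpace ℝ ι) : ‖Q t‖ ≤ ‖R t‖ :=
    (sq_le_sq₀ (norm_nonneg _) (norm_nonneg _)).1 <|
      ((hBx _).trans_le (hle _)).trans_eq (hBy _).symm
  exact tsub_le_tsub_left (measure_seminorm_le_of_norm_le (φ := fun r ↦ φ (r ^ 2)) hQR
    (fun t ↦ (hYell.charFun_map_mulVec_sub hY A t).trans (congrArg φ (hBy _).symm))
    (fun t ↦ (hXell.charFun_map_mulVec_sub hX A t).trans (congrArg φ (hBx _).symm)) _ c) 1

end EllipticalVectors

section Gini

variable {n : ℕ}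

/-- The Gini index as a seminorm on `ℝⁿ`. -/
noncomputable def giniSeminorm (n : ℕ) : Seminorm ℝ (Fin n → ℝ) :=
  Seminorm.of gini
    (fun x y ↦ by
      simp only [gini, ← mul_add, ← Finset.sum_add_distrib]
      gcongr with i _ j
      simpa only [Pi.add_apply, add_sub_add_comm] using abs_add_le _ _)
    (fun a x ↦ by
      simp only [gini, Pi.smul_apply, smul_eq_mul, ← mul_sub, abs_mul, ← Finset.mul_sum,
        Real.norm_eq_abs, mul_left_comm])

theorem gini_sub_const (x : Fin n → ℝ) (c : ℝ) : gini (x - fun _ ↦ c) = gini x := by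
  simp only [gini, Pi.sub_apply, sub_sub_sub_cancel_right]

theorem centeringMatrix_mulVec (x : Fin n → ℝ) :
    centeringMatrix n *ᵥ x = x - fun _ ↦ (n : ℝ)⁻¹ * ∑ i, x i := by
  rw [centeringMatrix, sub_mulVec, one_mulVec, smul_mulVec]
  ext i
  simp [mulVec, dotProduct]

theorem gini_centeringMatrix_mulVec (x : Fin n → ℝ) : gini (centeringMatrix n *ᵥ x) = gini x := by
  rw [centeringMatrix_mulVec, gini_sub_const]

theorem transpose_centeringMatrix : (centeringMatrix n)ᵀ = centeringMatrix n := by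
  rw [centeringMatrix, transpose_sub, transpose_one, transpose_smul]
  rfl

theorem sum_vecMul_centeringMatrix (t : Fin n → ℝ) : ∑ i, (t ᵥ* centeringMatrix n) i = 0 := by
  rcases n.eq_zero_or_pos with rfl | hn
  · simp
  · rw [← mulVec_transpose, transpose_centeringMatrix, centeringMatrix_mulVec]
    simp [mul_inv_cancel_left₀ (Nat.cast_ne_zero.2 hn.ne' : (n : ℝ) ≠ 0)]

theorem dotProduct_mulVec_le_of_sum_eq_zero {ι : Type*} [Fintype ι] {S T : Matrix ι ι ℝ} {ε : ℝ}
    (h : (T - S + ε • Matrix.of fun _ _ ↦ (1 : ℝ)).PosSemidef) {s : ι → ℝ} (hs : ∑ i, s i = 0) :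
    s ⬝ᵥ S *ᵥ s ≤ s ⬝ᵥ T *ᵥ s := by
  have hones : (Matrix.of fun _ _ : ι ↦ (1 : ℝ)) *ᵥ s = 0 := by
    ext i
    simpa [mulVec, dotProduct] using hs
  have := h.dotProduct_mulVec_nonneg s
  rwa [star_trivial, add_mulVec, smul_mulVec, hones, smul_zero, add_zero, sub_mulVec,
    dotProduct_sub, sub_nonneg] at this

end Gini

/-- If `X ∼ ELLₙ(μ, Σx, φ)`, `Y ∼ ELLₙ(μ, Σy, φ)` and there exists
`ε ∈ ℝ` such that `Σy − Σx + ε·1_{n×n}` is positive semidefinite, then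
`G_n(AX − Aμ) ≤_st G_n(AY − Aμ)` for the centering matrix `A`; in particular,
if `μ = c·1ₙ` then `G_n(X) ≤_st G_n(Y)`. -/
theorem gini_st_order_elliptical_eps {Ω : Type*} [MeasurableSpace Ω]
    (P : Measure Ω) [IsProbabilityMeasure P] {n : ℕ}
    (X Y : Ω → Fin n → ℝ) (hX : Measurable X) (hY : Measurable Y)
    (μ : Fin n → ℝ) (Sx Sy : Matrix (Fin n) (Fin n) ℝ)
    (hSx : Sx.PosSemidef) (hSy : Sy.PosSemidef)
    (φ : ℝ → ℂ)
    (hXell : ∀ t : Fin n → ℝ,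
      charFn P X t = Complex.exp (((∑ i, t i * μ i : ℝ) : ℂ) * Complex.I) * φ (t ⬝ᵥ Sx *ᵥ t))
    (hYell : ∀ t : Fin n → ℝ,
      charFn P Y t = Complex.exp (((∑ i, t i * μ i : ℝ) : ℂ) * Complex.I) * φ (t ⬝ᵥ Sy *ᵥ t))
    (hle : ∃ ε : ℝ, (Sy - Sx + ε • Matrix.of (fun _ _ => (1 : ℝ))).PosSemidef) :
    (∀ t : ℝ, P {ω | t < gini (centeringMatrix n *ᵥ X ω - centeringMatrix n *ᵥ μ)}
        ≤ P {ω | t < gini (centeringMatrix n *ᵥ Y ω - centeringMatrix n *ᵥ μ)}) ∧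
    (∀ c : ℝ, μ = (fun _ => c) →
      ∀ t : ℝ, P {ω | t < gini (X ω)} ≤ P {ω | t < gini (Y ω)}) := by
  obtain ⟨ε, hε⟩ := hle
  have hcentered (t : ℝ) :
      P {ω | t < gini (centeringMatrix n *ᵥ (X ω - μ))} ≤
        P {ω | t < gini (centeringMatrix n *ᵥ (Y ω - μ))} :=
    IsElliptical.measure_lt_seminorm_le hXell hYell hX hY hSx hSy
      (fun s ↦ dotProduct_mulVec_le_of_sum_eq_zero hε (sum_vecMul_centeringMatrix s))
      (giniSeminorm n) t
  refine ⟨fun t ↦ ?_, fun c hμ t ↦ ?_⟩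
  · simpa only [mulVec_sub] using hcentered t
  · simpa only [gini_centeringMatrix_mulVec, hμ, gini_sub_const] using hcentered t
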